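/- arXiv:1306.4791 — 2 statements merged into one kernel-verified Lean document; each statement's English description precedes it below -/
import Mathlib

section
/- Let L be a field of characteristic p > 0. Assume that f_1, …, f_{n−1} ∈ L(x_1, …, x_n) are p-independent over L(x_1^p, …, x_n^p), and let g_1, …, g_{n−1} ∈ L(x_1, …, x_n) satisfy d_F(g_i) = 0 for all i, where F = (f_1, …, f_{n−1}). Then d_G = c·d_F for some c ∈ L(x_1, …, x_n) with d_F(c) = 0, where G = (g_1, …, g_{n−1}). -/
open MvPolynomial

/-!
Let `K = M(f₁, …, f_m)` for `M = L(x₁^p, …, xₙ^p)` and `n = m + 1`. Every derivation here is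
`M`-linear, so the gradient of an element of `K` is a combination of `∇f₁, …, ∇f_m` with
coefficients in `K`. Hence `d_F` vanishes on `K`, and if all `gᵢ` lie in `K` then `d_G = c • d_F`,
where `c ∈ K` is the determinant of the coefficients.

If instead some constant `t = gᵢ` of `d_F` lies outside `K`, then `L(x₁, …, xₙ) = K(t)`: this field
is purely inseparable over `K`, of degree at most `p` by `p`-independence. The determinant
`d_F t = 0` yields a nontrivial combination of the `∂/∂xⱼ` that kills `f₁, …, f_m, t`, hence all of
`L(x₁, …, xₙ)`, so every Jacobian determinant vanishes and `c = 0` works.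
-/

section FieldDegree

open IntermediateField

variable {M F : Type*} [Field M] [Field F] [Algebra M F]

theorem finrank_adjoin_simple_le_of_pow_mem {x : F} {n : ℕ} (hn : n ≠ 0)
    (hx : x ^ n ∈ (algebraMap M F).range) : Module.finrank M (adjoin M {x}) ≤ n := by
  obtain ⟨a, ha⟩ := hx
  have hroot : Polynomial.aeval x (Polynomial.X ^ n - Polynomial.C a) = 0 := by simp [ha]
  have hmonic := Polynomial.monic_X_pow_sub_C a hn
  rw [adjoin.finrank ⟨_, hmonic, hroot⟩, ← Polynomial.natDegree_X_pow_sub_C (n := n) (r := a)]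
  exact Polynomial.natDegree_le_of_dvd (minpoly.dvd M x hroot) hmonic.ne_zero

theorem finrank_adjoin_finset_le_of_pow_mem {n : ℕ} (hn : n ≠ 0) (S : Finset F)
    (hS : ∀ x ∈ S, x ^ n ∈ (algebraMap M F).range) :
    Module.finrank M (adjoin M (S : Set F)) ≤ n ^ S.card := by
  classical
  induction S using Finset.induction_on with
  | empty =>
    rw [Finset.coe_empty, adjoin_empty, IntermediateField.finrank_bot, Finset.card_empty, pow_zero]
  | insert x S hx ih =>
    rw [Finset.forall_mem_insert] at hS
    rw [Finset.coe_insert, Set.insert_eq, adjoin_union, Finset.card_insert_of_notMem hx, pow_succ']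
    exact (finrank_sup_le _ _).trans
      (Nat.mul_le_mul (finrank_adjoin_simple_le_of_pow_mem hn hS.1) (ih hS.2))

theorem finrank_le_pow_card_of_adjoin_range_eq_top {ι : Type*} [Fintype ι] {x : ι → F} {n : ℕ}
    (hn : n ≠ 0) (hx : ∀ i, x i ^ n ∈ (algebraMap M F).range)
    (hgen : adjoin M (Set.range x) = ⊤) : Module.finrank M F ≤ n ^ Fintype.card ι := by
  classical
  have hfinset := finrank_adjoin_finset_le_of_pow_mem hn (Finset.univ.image x) (by simpa using hx)
  rw [Finset.coe_image, Finset.coe_univ, Set.image_univ, hgen, finrank_top'] at hfinset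
  exact hfinset.trans (Nat.pow_le_pow_right (Nat.pos_of_ne_zero hn) Finset.card_image_le)

theorem finiteDimensional_of_adjoin_range_eq_top {ι : Type*} [Finite ι] {x : ι → F} {n : ℕ}
    (hn : n ≠ 0) (hx : ∀ i, x i ^ n ∈ (algebraMap M F).range)
    (hgen : adjoin M (Set.range x) = ⊤) : FiniteDimensional M F := by
  have hint : ∀ y ∈ Set.range x, IsIntegral M y := by
    rintro _ ⟨i, rfl⟩
    obtain ⟨a, ha⟩ := hx i
    exact .of_pow (Nat.pos_of_ne_zero hn) (ha ▸ isIntegral_algebraMap)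
  have := finiteDimensional_adjoin hint
  rw [hgen] at this
  exact topEquiv.toLinearEquiv.finiteDimensional

theorem isPurelyInseparable_of_adjoin_range_eq_top {ι : Type*} {x : ι → F} (p : ℕ) [ExpChar M p]
    (hx : ∀ i, x i ^ p ∈ (algebraMap M F).range) (hgen : adjoin M (Set.range x) = ⊤) :
    IsPurelyInseparable M F := by
  have hadjoin : IsPurelyInseparable M (adjoin M (Set.range x)) :=
    (isPurelyInseparable_adjoin_iff_pow_mem M F p).mpr
      (Set.forall_mem_range.mpr fun i => ⟨1, by simpa using hx i⟩)
  rw [hgen] at hadjoin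
  exact (topEquiv (F := M) (E := F)).isPurelyInseparable

theorem adjoin_simple_eq_top_of_finrank_le {K : Type*} [Field K] [Algebra K F] (q : ℕ)
    [ExpChar K q] [FiniteDimensional K F] [IsPurelyInseparable K F]
    (hdeg : Module.finrank K F ≤ q) {t : F} (ht : t ∉ (⊥ : IntermediateField K F)) :
    adjoin K {t} = ⊤ := by
  obtain ⟨e, he⟩ := IsPurelyInseparable.finrank_eq_pow (F := K) (adjoin K {t}) q
  have he0 : e ≠ 0 := by
    rintro rfl
    exact ht (finrank_adjoin_simple_eq_one_iff.mp (by simpa using he))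
  refine eq_of_le_of_finrank_le le_top ?_
  rw [finrank_top', he]
  exact hdeg.trans (Nat.le_self_pow he0 q)

/-- `p`-independence of `f` over `M`: the monomials in `f` with all exponents less than `p` are
linearly independent over `M`. -/
def PIndependent (M : Type*) {F ι : Type*} [Field M] [Field F] [Algebra M F] [Fintype ι] (p : ℕ)
    (f : ι → F) : Prop :=
  LinearIndependent M fun e : ι → Fin p => ∏ i, f i ^ (e i : ℕ)

theorem PIndependent.pow_card_le_finrank_adjoin {ι : Type*} [Fintype ι] [FiniteDimensional M F]
    {p : ℕ} {f : ι → F} (hf : PIndependent M p f) :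
    p ^ Fintype.card ι ≤ Module.finrank M (adjoin M (Set.range f)) := by
  classical
  have hmem : ∀ e : ι → Fin p, ∏ i, f i ^ (e i : ℕ) ∈ adjoin M (Set.range f) := fun e =>
    prod_mem fun i _ => pow_mem (subset_adjoin M _ (Set.mem_range_self i)) _
  have hK : LinearIndependent M fun e => (⟨_, hmem e⟩ : adjoin M (Set.range f)) :=
    LinearIndependent.of_comp (adjoin M (Set.range f)).val.toLinearMap hf
  simpa using hK.fintype_card_le_finrank

theorem PIndependent.adjoin_insert_eq_top (p : ℕ) [ExpChar M p] [FiniteDimensional M F]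
    [IsPurelyInseparable M F] {ι : Type*} [Fintype ι]
    (hdeg : Module.finrank M F ≤ p ^ (Fintype.card ι + 1)) {f : ι → F}
    (hf : PIndependent M p f) {t : F} (ht : t ∉ adjoin M (Set.range f)) :
    adjoin M (insert t (Set.range f)) = ⊤ := by
  set K := adjoin M (Set.range f)
  have : ExpChar K p := expChar_of_injective_algebraMap (algebraMap M K).injective p
  have hKF : Module.finrank K F ≤ p := by
    refine Nat.le_of_mul_le_mul_left ?_ (pow_pos (expChar_pos M p) (Fintype.card ι))
    calc p ^ Fintype.card ι * Module.finrank K F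
        ≤ Module.finrank M K * Module.finrank K F :=
          Nat.mul_le_mul_right _ hf.pow_card_le_finrank_adjoin
      _ = Module.finrank M F := Module.finrank_mul_finrank M K F
      _ ≤ p ^ Fintype.card ι * p := hdeg
  have htop : adjoin K {t} = ⊤ :=
    adjoin_simple_eq_top_of_finrank_le p hKF fun h => ht (by simpa [mem_bot] using h)
  rw [Set.insert_eq, Set.union_comm, ← adjoin_adjoin_left, htop, restrictScalars_top]

end FieldDegree

theorem det_snoc_sum_smul {R : Type*} [CommRing R] {m : ℕ} (A : Matrix (Fin m) (Fin m) R)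
    (u : Fin m → Fin (m + 1) → R) (w : Fin (m + 1) → R) :
    (Matrix.of (Fin.snoc (fun i => ∑ j, A i j • u j) w) :
        Matrix (Fin (m + 1)) (Fin (m + 1)) R).det =
      A.det * (Matrix.of (Fin.snoc u w) : Matrix (Fin (m + 1)) (Fin (m + 1)) R).det := by
  let B : Matrix (Fin (m + 1)) (Fin (m + 1)) R :=
    (Matrix.fromBlocks A 0 0 (1 : Matrix (Fin 1) (Fin 1) R)).reindex finSumFinEquiv finSumFinEquiv
  have hB : B.det = A.det := by
    simp only [B, Matrix.det_reindex_self, Matrix.det_fromBlocks_zero₂₁, Matrix.det_one, mul_one]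
  have hmul :
      Matrix.of (Fin.snoc (fun i => ∑ j, A i j • u j) w) = B * Matrix.of (Fin.snoc u w) := by
    ext a b
    refine Fin.lastCases ?_ (fun a => ?_) a <;>
      simp [B, Matrix.mul_apply, Fin.sum_univ_castSucc]
  rw [hmul, Matrix.det_mul, hB]

section JacobianDerivation

open IntermediateField

variable {M F : Type*} [Field M] [Field F] [Algebra M F]

theorem derivation_mem_span_image_of_mem_adjoin {V : Type*} [AddCommGroup V] [Module M V]
    [Module F V] (D : Derivation M F V) {S : Set F} {z : F} (hz : z ∈ adjoin M S) :
    D z ∈ Submodule.span (adjoin M S) (D '' S) := by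
  have smul_mem : ∀ c ∈ adjoin M S, ∀ v ∈ Submodule.span (adjoin M S) (D '' S),
      c • v ∈ Submodule.span (adjoin M S) (D '' S) :=
    fun c hc _ hv => Submodule.smul_mem _ (⟨c, hc⟩ : adjoin M S) hv
  induction hz using adjoin_induction with
  | mem x hx => exact Submodule.subset_span (Set.mem_image_of_mem D hx)
  | algebraMap a => simp only [Derivation.map_algebraMap, zero_mem]
  | add x y _ _ hDx hDy => simpa only [map_add] using add_mem hDx hDy
  | mul x y hx hy hDx hDy =>
    simpa only [Derivation.leibniz] using add_mem (smul_mem x hx _ hDy) (smul_mem y hy _ hDx)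
  | inv x hx hDx =>
    simpa only [Derivation.leibniz_inv] using smul_mem _ (neg_mem (pow_mem (inv_mem hx) 2)) _ hDx

theorem derivation_eq_zero_of_mem_adjoin {V : Type*} [AddCommGroup V] [Module M V] [Module F V]
    (D : Derivation M F V) {S : Set F} (hS : ∀ x ∈ S, D x = 0) {z : F} (hz : z ∈ adjoin M S) :
    D z = 0 := by
  have hspan : Submodule.span (adjoin M S) (D '' S) ≤ ⊥ :=
    Submodule.span_le.mpr (Set.image_subset_iff.mpr hS)
  exact hspan (derivation_mem_span_image_of_mem_adjoin D hz)

/-- The vector `(δ i z)ᵢ` of the values of a family of derivations, as a vector-valued derivation.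
For the partial derivatives of a rational function field this is the gradient. -/
def formalGradient {ι : Type*} (δ : ι → Derivation M F F) : Derivation M F (ι → F) :=
  Derivation.mk' (LinearMap.pi fun i => (δ i).toLinearMap) fun _ _ => by
    ext
    simp

/-- The Jacobian derivation `d_f` of `f = (f₁, …, f_m)` for a family of `m + 1` derivations:
`d_f q` is the determinant with rows `∇f₁, …, ∇f_m, ∇q`. -/
noncomputable def jacobianDerivation {m : ℕ} (δ : Fin (m + 1) → Derivation M F F) (f : Fin m → F) :
    Derivation M F F :=
  (Matrix.detRowAlternating.toMultilinearMap.curryRight fun a => formalGradient δ (f a)).compDer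
    (formalGradient δ)

variable {m : ℕ} (δ : Fin (m + 1) → Derivation M F F)

theorem jacobianDerivation_apply (f : Fin m → F) (q : F) :
    jacobianDerivation δ f q =
      (Matrix.of (Fin.snoc (fun a => formalGradient δ (f a)) (formalGradient δ q)) :
        Matrix (Fin (m + 1)) (Fin (m + 1)) F).det := rfl

theorem jacobianDerivation_apply_self (f : Fin m → F) (i : Fin m) :
    jacobianDerivation δ f (f i) = 0 := by
  rw [jacobianDerivation_apply]
  refine Matrix.det_zero_of_row_eq (Fin.castSucc_lt_last i).ne ?_
  ext b
  simp

theorem jacobianDerivation_eq_zero_of_mem_adjoin (f : Fin m → F) {z : F}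
    (hz : z ∈ adjoin M (Set.range f)) : jacobianDerivation δ f z = 0 :=
  derivation_eq_zero_of_mem_adjoin _
    (Set.forall_mem_range.mpr (jacobianDerivation_apply_self δ f)) hz

theorem exists_jacobianDerivation_eq_smul {f g : Fin m → F}
    (hg : ∀ i, g i ∈ adjoin M (Set.range f)) :
    ∃ c ∈ adjoin M (Set.range f), jacobianDerivation δ g = c • jacobianDerivation δ f := by
  have chain_rule : ∀ i, ∃ a : Fin m → adjoin M (Set.range f),
      ∑ j, a j • formalGradient δ (f j) = formalGradient δ (g i) := fun i => by
    have hspan := derivation_mem_span_image_of_mem_adjoin (formalGradient δ) (hg i)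
    rwa [← Set.range_comp, Submodule.mem_span_range_iff_exists_fun] at hspan
  choose A hA using chain_rule
  let φ := algebraMap (adjoin M (Set.range f)) F
  have hrows : (fun i => ∑ j, (Matrix.of A).map φ i j • formalGradient δ (f j)) =
      fun i => formalGradient δ (g i) := funext hA
  refine ⟨φ (Matrix.of A).det, (Matrix.of A).det.2, Derivation.ext fun q => ?_⟩
  rw [Derivation.smul_apply, smul_eq_mul, jacobianDerivation_apply, jacobianDerivation_apply,
    ← hrows, det_snoc_sum_smul, RingHom.map_det, RingHom.mapMatrix_apply]

theorem jacobianDerivation_eq_zero_of_adjoin_eq_top {f : Fin m → F} {t : F}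
    (hgen : adjoin M (insert t (Set.range f)) = ⊤) (ht : jacobianDerivation δ f t = 0)
    (g : Fin m → F) : jacobianDerivation δ g = 0 := by
  obtain ⟨v, hv, hker⟩ := Matrix.exists_mulVec_eq_zero_iff.mpr ht
  let D : Derivation M F F := (dotProductBilin F F v).compDer (formalGradient δ)
  have hD_apply : ∀ z, D z = formalGradient δ z ⬝ᵥ v := fun z => dotProduct_comm v _
  have hD_gen : ∀ z ∈ insert t (Set.range f), D z = 0 := by
    simp only [Set.forall_mem_insert, Set.forall_mem_range, hD_apply]
    refine ⟨?_, fun i => ?_⟩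
    · simpa [Matrix.mulVec] using congrFun hker (Fin.last m)
    · simpa [Matrix.mulVec] using congrFun hker i.castSucc
  have hD : ∀ z, formalGradient δ z ⬝ᵥ v = 0 := fun z => by
    rw [← hD_apply, derivation_eq_zero_of_mem_adjoin D hD_gen (hgen ▸ mem_top)]
  refine Derivation.ext fun q => Matrix.exists_mulVec_eq_zero_iff.mp ⟨v, hv, ?_⟩
  ext a
  refine Fin.lastCases ?_ (fun i => ?_) a <;> simp [Matrix.mulVec, hD]

theorem corollary2_jacobian_constants_general (p : ℕ) [ExpChar M p]
    [FiniteDimensional M F] [IsPurelyInseparable M F] (hdeg : Module.finrank M F ≤ p ^ (m + 1))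
    {f : Fin m → F} (hf : PIndependent M p f) {g : Fin m → F}
    (hg : ∀ i, jacobianDerivation δ f (g i) = 0) :
    ∃ c : F, jacobianDerivation δ f c = 0 ∧
      jacobianDerivation δ g = c • jacobianDerivation δ f := by
  by_cases hgK : ∀ i, g i ∈ adjoin M (Set.range f)
  · obtain ⟨c, hc, hcg⟩ := exists_jacobianDerivation_eq_smul δ hgK
    exact ⟨c, jacobianDerivation_eq_zero_of_mem_adjoin δ f hc, hcg⟩
  · obtain ⟨i, hi⟩ := not_forall.mp hgK
    have hgen := hf.adjoin_insert_eq_top p (by simpa using hdeg) hi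
    refine ⟨0, map_zero _, ?_⟩
    rw [zero_smul, jacobianDerivation_eq_zero_of_adjoin_eq_top δ hgen (hg i) g]

end JacobianDerivation

section RationalFunctions

variable {L F : Type*} [Field L] [Field F] [Algebra L F]

/-- A derivation over `L` vanishing on an intermediate field `M`, as a derivation over `M`;
it turns `∂/∂xᵢ` into a derivation over `M = L(x₁^p, …, xₙ^p)`. -/
def derivationOver (M : IntermediateField L F) (D : Derivation L F F) (hD : ∀ c ∈ M, D c = 0) :
    Derivation M F F :=
  Derivation.mk'
    { toFun := D
      map_add' := map_add D
      map_smul' := fun c z => by simp [IntermediateField.smul_def, hD c c.2] }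
    D.leibniz

theorem derivation_eq_zero_of_mem_adjoin_pow_char (p : ℕ) [CharP F p] (D : Derivation L F F)
    {ι : Type*} {x : ι → F} {c : F}
    (hc : c ∈ IntermediateField.adjoin L (Set.range fun i => x i ^ p)) : D c = 0 :=
  derivation_eq_zero_of_mem_adjoin D
    (Set.forall_mem_range.mpr fun i => by simp [Derivation.leibniz_pow]) hc

theorem adjoin_range_algebraMap_X_eq_top
    {σ : Type*} [Algebra (MvPolynomial σ L) F] [IsFractionRing (MvPolynomial σ L) F]
    [IsScalarTower L (MvPolynomial σ L) F] :
    IntermediateField.adjoin L (Set.range fun i : σ => algebraMap (MvPolynomial σ L) F (X i)) =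
      ⊤ := by
  have hrange : (IsScalarTower.toAlgHom L (MvPolynomial σ L) F).range =
      Algebra.adjoin L (Set.range fun i : σ => algebraMap (MvPolynomial σ L) F (X i)) := by
    rw [← Algebra.map_top, ← adjoin_range_X, AlgHom.map_adjoin, ← Set.range_comp]
    rfl
  rw [← IsFractionRing.algHom_fieldRange_eq_of_comp_eq_of_range_eq (f := AlgHom.id L F) rfl hrange]
  exact AlgHom.fieldRange_eq_top.mpr Function.surjective_id

end RationalFunctions

/-- Corollary 2. In the fraction field `F` of `L[x₁,…,xₙ]` (`n = m+1`),
with `δ i` the extension of `∂/∂xᵢ`, if `f₁,…,f_{n-1}` are `p`-independent over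
`L(x₁^p,…,xₙ^p)` and `g₁,…,g_{n-1}` are constants of the Jacobian derivation `d_F`,
then `d_G = c·d_F` for some constant `c` of `d_F`. -/
theorem corollary2_jacobian_constants
    {L : Type*} [Field L] (p : ℕ) [Fact p.Prime] [CharP L p] (m : ℕ)
    (F : Type*) [Field F] [Algebra (MvPolynomial (Fin (m + 1)) L) F]
    [IsFractionRing (MvPolynomial (Fin (m + 1)) L) F]
    [Algebra L F] [IsScalarTower L (MvPolynomial (Fin (m + 1)) L) F]
    (δ : Fin (m + 1) → Derivation L F F)
    (hδ : ∀ (i : Fin (m + 1)) (q : MvPolynomial (Fin (m + 1)) L),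
      δ i (algebraMap (MvPolynomial (Fin (m + 1)) L) F q) =
        algebraMap (MvPolynomial (Fin (m + 1)) L) F (pderiv i q))
    (f : Fin m → F)
    (hind : LinearIndependent
      ↥(IntermediateField.adjoin L
          (Set.range fun i : Fin (m + 1) =>
            algebraMap (MvPolynomial (Fin (m + 1)) L) F (X i) ^ p))
      (fun e : Fin m → Fin p => ∏ i, f i ^ (e i : ℕ)))
    (g : Fin m → F)
    (hg : ∀ i, Matrix.det
      (Matrix.of (Fin.snoc (fun a b => δ b (f a)) (fun b => δ b (g i)))) = 0) :
    ∃ c : F,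
      Matrix.det (Matrix.of (Fin.snoc (fun a b => δ b (f a)) (fun b => δ b c))) = 0 ∧
      ∀ q : F,
        Matrix.det (Matrix.of (Fin.snoc (fun a b => δ b (g a)) (fun b => δ b q))) =
          c * Matrix.det (Matrix.of (Fin.snoc (fun a b => δ b (f a)) (fun b => δ b q))) := by
  have : CharP F p := charP_of_injective_algebraMap (algebraMap L F).injective p
  set M := IntermediateField.adjoin L
    (Set.range fun i : Fin (m + 1) => algebraMap (MvPolynomial (Fin (m + 1)) L) F (X i) ^ p)
  have : CharP M p := charP_of_injective_algebraMap (algebraMap L M).injective p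
  have hp : p ≠ 0 := (Fact.out : p.Prime).ne_zero
  have hgen := IntermediateField.adjoin_eq_top_of_adjoin_eq_top (F := L) (E := M)
    (adjoin_range_algebraMap_X_eq_top (L := L) (F := F) (σ := Fin (m + 1)))
  have hpow : ∀ i, algebraMap (MvPolynomial (Fin (m + 1)) L) F (X i) ^ p ∈ (algebraMap M F).range :=
    fun i => ⟨⟨_, IntermediateField.subset_adjoin L _ (Set.mem_range_self i)⟩, rfl⟩
  have := finiteDimensional_of_adjoin_range_eq_top hp hpow hgen
  have := isPurelyInseparable_of_adjoin_range_eq_top p hpow hgen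
  have hdeg : Module.finrank M F ≤ p ^ (m + 1) := by
    simpa using finrank_le_pow_card_of_adjoin_range_eq_top hp hpow hgen
  let δM : Fin (m + 1) → Derivation M F F := fun i =>
    derivationOver M (δ i) fun _ => derivation_eq_zero_of_mem_adjoin_pow_char p (δ i)
  obtain ⟨c, hc, hcg⟩ := corollary2_jacobian_constants_general δM p hdeg hind hg
  exact ⟨c, hc, fun q => DFunLike.congr_fun hcg q⟩
end

section
/- Let K be a unique factorization domain of characteristic p > 0. If d is a K-derivation of K[x,y] such that d(x), d(y) are coprime (gcd(d(x), d(y)) is a unit), d* = 0, and K[x,y]^d ≠ K[x^p, y^p], then d is a Jacobian derivation, i.e. d = d_f for some f ∈ K[x,y]. -/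
open MvPolynomial

/-!
Write `a = d x`, `b = d y` and `ω = b dx - a dy`. Zero divergence says that `ω` is closed, and
`d = d_f` says that `ω = df`. In characteristic `p` a closed form is exact up to its Cartier part:
`ω = df - B x^(p-1) dx - C y^(p-1) dy`, where `B = ∂x^(p-1) b` and `C = -∂y^(p-1) a` are killed by
both partial derivatives, hence by `d`. It remains to show `B = C = 0`.

The operator `d^p` is again a derivation. A constant `h` of `d` outside `K[x^p, y^p]` has
`dh ≠ 0` and is killed by both `d` and `d^p`, so these two derivations are proportional and
`ω(d^p) = 0`. Since also `ω(d) = 0`, Katz's formula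
`D^(p-1) (x^(p-1) D x) = x^(p-1) D^p x - (D x)^p`, applied with `D = d` to `x` and to `y`, gives
`B a^p + C b^p = 0`. By coprimality `b` divides its derivative `B` and `a` divides its derivative
`C`, which for degree reasons forces `B = C = 0`.
-/

open Finset

section Derivation

variable {R A : Type*} [CommRing R] [CommRing A] [Algebra R A]

theorem iterate_sub_one_apply {α : Type*} (f : α → α) {n : ℕ} (hn : n ≠ 0) (a : α) :
    f^[n - 1] (f a) = f^[n] a :=
  congrFun (Function.iterate_pred_comp_of_pos f (Nat.pos_of_ne_zero hn)) a

theorem iterate_map_sum {M F ι : Type*} [AddCommMonoid M] [FunLike F M M]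
    [AddMonoidHomClass F M M] (φ : F) (n : ℕ) (s : Finset ι) (g : ι → M) :
    φ^[n] (∑ i ∈ s, g i) = ∑ i ∈ s, φ^[n] (g i) := by
  induction n with
  | zero => rfl
  | succ n ih => simp only [Function.iterate_succ_apply', ih, map_sum]

theorem iterate_derivation_mul_of_apply_eq_zero (D : Derivation R A A) {c : A} (hc : D c = 0)
    (n : ℕ) (a : A) : D^[n] (c * a) = c * D^[n] a := by
  induction n with
  | zero => rfl
  | succ n ih => simp [Function.iterate_succ_apply', ih, hc]

theorem iterate_derivation_mul (D : Derivation R A A) (n : ℕ) (a b : A) :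
    D^[n] (a * b) = ∑ ij ∈ antidiagonal n, (n.choose ij.1 : A) * (D^[ij.1] a * D^[ij.2] b) := by
  induction n with
  | zero => simp
  | succ n ih =>
    rw [sum_antidiagonal_choose_succ_mul (fun i j => D^[i] a * D^[j] b),
      Function.iterate_succ_apply', ih, map_sum, ← sum_add_distrib]
    refine sum_congr rfl fun ij hij => ?_
    rw [← Nat.choose_symm_of_eq_add (HasAntidiagonal.mem_antidiagonal.1 hij).symm]
    simp only [Derivation.leibniz, Derivation.map_natCast, smul_eq_mul,
      Function.iterate_succ_apply', mul_zero, add_zero]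
    ring

/-- If `ε u = 0`, the only term of `D^n (u^n w)` not killed by `ε` is the one in which every
factor `u` is differentiated once. -/
theorem map_iterate_derivation_pow_mul {B : Type*} [CommRing B] (D : Derivation R A A)
    (ε : A →+* B) {u : A} (hu : ε u = 0) (n : ℕ) (w : A) :
    ε (D^[n] (u ^ n * w)) = n.factorial * ε (D u) ^ n * ε w := by
  induction n generalizing w with
  | zero => simp
  | succ n ih =>
    have hD : D (u ^ (n + 1) * w) = u ^ n * ((n + 1 : ℕ) * D u * w + u * D w) := by
      simp only [Derivation.leibniz, Derivation.leibniz_pow, smul_eq_mul, nsmul_eq_mul,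
        Nat.add_sub_cancel]
      ring
    rw [Function.iterate_succ_apply, hD, ih, Nat.factorial_succ]
    simp only [map_add, map_mul, map_natCast, hu, Nat.cast_mul]
    ring

theorem exists_derivation_polynomial_C (D : Derivation R A A) :
    ∃ D' : Derivation ℤ (Polynomial A) (Polynomial A),
      D' Polynomial.X = 0 ∧ ∀ a, D' (Polynomial.C a) = Polynomial.C (D a) :=
  letI : Differential A := ⟨D.restrictScalars ℤ⟩
  ⟨Differential.mapCoeffs, Differential.mapCoeffs_X, Differential.mapCoeffs_C⟩

/-- The antiderivative of `g`, up to the obstruction `x^(p-1) D^(p-1) g`, along a derivation `D`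
with `D x = 1`. It is the iterated partial integration
`∑_{k=1}^{p-1} (-1)^(k-1) x^k / k! D^(k-1) g`, where `(-1)^(k-1) / k!` is written as `(p-1-k)!`
(equal in characteristic `p`) and the sum is indexed by `j = k - 1`. -/
def antiderivative (p : ℕ) (D : Derivation R A A) (x g : A) : A :=
  ∑ j ∈ range (p - 1), ((p - 2 - j).factorial : A) * (x ^ (j + 1) * D^[j] g)

theorem apply_antiderivative_eq_zero (p : ℕ) {D E : Derivation R A A} (hcomm : Function.Commute E D)
    {x g : A} (hx : E x = 0) (hg : E g = 0) : E (antiderivative p D x g) = 0 := by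
  have hiter (j : ℕ) : E (D^[j] g) = 0 := by
    rw [(hcomm.iterate_right j).eq, hg, iterate_map_zero]
  simp [antiderivative, map_sum, Derivation.leibniz_pow, hx, hiter]

end Derivation

section CharP

variable {R A : Type*} [CommRing R] [CommRing A] [Algebra R A]
variable (p : ℕ) [hp : Fact p.Prime] [CharP A p]

theorem natCast_factorial_sub_one_char : ((p - 1).factorial : A) = -1 := by
  have hwilson := congrArg (ZMod.castHom (dvd_refl p) A) (ZMod.wilsons_lemma p)
  rwa [map_natCast, map_neg, map_one] at hwilson

theorem sub_pow_sub_one_char (x y : A) :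
    (x - y) ^ (p - 1) = ∑ i ∈ range p, x ^ i * y ^ (p - 1 - i) := by
  have hX : (Polynomial.X - Polynomial.C y) ^ (p - 1) =
      ∑ i ∈ range p, Polynomial.X ^ i * Polynomial.C y ^ (p - 1 - i) := by
    apply (Polynomial.monic_X_sub_C y).isRegular.right
    dsimp only
    rw [(Commute.all _ _).geom_sum₂_mul, ← pow_succ, Nat.sub_add_cancel hp.out.one_le,
      sub_pow_char]
  simpa [Polynomial.eval_finsetSum] using congrArg (Polynomial.eval x) hX

theorem iterate_char_derivation_mul (D : Derivation R A A) (a b : A) :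
    D^[p] (a * b) = a * D^[p] b + b * D^[p] a := by
  have hchoose : ∀ ij ∈ antidiagonal p, ij ≠ (0, p) ∧ ij ≠ (p, 0) →
      (p.choose ij.1 : A) * (D^[ij.1] a * D^[ij.2] b) = 0 := by
    rintro ⟨i, j⟩ hij ⟨h0, h1⟩
    rw [HasAntidiagonal.mem_antidiagonal] at hij
    have hdvd : p ∣ p.choose i := hp.out.dvd_choose_self (by grind) (by grind)
    rw [(CharP.cast_eq_zero_iff A p _).2 hdvd, zero_mul]
  rw [iterate_derivation_mul, sum_eq_add_of_mem (0, p) (p, 0) (by simp) (by simp)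
    (by simp [hp.out.ne_zero.symm]) hchoose]
  simp [mul_comm b]

/-- The `p`-th iterate of a derivation in characteristic `p`, as a derivation. -/
def charPowDerivation (D : Derivation R A A) : Derivation R A A :=
  Derivation.mk' (D.toLinearMap ^ p) fun a b => by
    simpa [Module.End.pow_apply] using iterate_char_derivation_mul p D a b

theorem charPowDerivation_apply (D : Derivation R A A) (a : A) :
    charPowDerivation p D a = D^[p] a := by
  simp [charPowDerivation, Module.End.pow_apply]

/-- Apply `map_iterate_derivation_pow_mul` to `(x - t)^(p-1) z` in `A[t]`, with `D` acting on
coefficients and `ε` the evaluation at `t = x`. -/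
theorem sum_iterate_derivation_pow_mul (D : Derivation R A A) (x z : A) :
    ∑ i ∈ range p, D^[p - 1] (x ^ i * z) * x ^ (p - 1 - i) = -(D x ^ (p - 1) * z) := by
  obtain ⟨D', hX, hC⟩ := exists_derivation_polynomial_C D
  have hterm (i : ℕ) : D'^[p - 1] (Polynomial.C x ^ i * Polynomial.X ^ (p - 1 - i) *
      Polynomial.C z) = Polynomial.C (D^[p - 1] (x ^ i * z)) * Polynomial.X ^ (p - 1 - i) := by
    have hXpow : D' (Polynomial.X ^ (p - 1 - i)) = 0 := by simp [Derivation.leibniz_pow, hX]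
    have hCiter : Function.Semiconj Polynomial.C D D' := fun a => (hC a).symm
    rw [mul_right_comm, mul_comm, ← Polynomial.C_pow, ← Polynomial.C_mul,
      iterate_derivation_mul_of_apply_eq_zero D' hXpow, ← hCiter.iterate_right, mul_comm]
  have heval := map_iterate_derivation_pow_mul D' (Polynomial.evalRingHom x)
    (u := Polynomial.C x - Polynomial.X) (by simp) (p - 1) (Polynomial.C z)
  rw [sub_pow_sub_one_char, sum_mul, iterate_map_sum, sum_congr rfl fun i _ => hterm i,
    natCast_factorial_sub_one_char] at heval
  simpa [hX, hC, Polynomial.eval_finsetSum] using heval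

theorem iterate_derivation_pow_mul_apply_self (D : Derivation R A A) (x : A) {i : ℕ}
    (hi : ¬p ∣ i + 1) : D^[p - 1] (x ^ i * D x) = x ^ i * D^[p] x := by
  apply ((CharP.isUnit_natCast_iff (R := A) hp.out).2 hi).mul_left_cancel
  calc ((i + 1 : ℕ) : A) * D^[p - 1] (x ^ i * D x)
      = D^[p - 1] (D (x ^ (i + 1))) := by
        rw [← iterate_derivation_mul_of_apply_eq_zero D (D.map_natCast _)]
        simp [Derivation.leibniz_pow]
    _ = charPowDerivation p D (x ^ (i + 1)) := by
        rw [iterate_sub_one_apply D hp.out.ne_zero, charPowDerivation_apply]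
    _ = ((i + 1 : ℕ) : A) * (x ^ i * D^[p] x) := by
        simp [Derivation.leibniz_pow, charPowDerivation_apply]

theorem iterate_derivation_pow_sub_one_mul_apply_self (D : Derivation R A A) (x : A) :
    D^[p - 1] (x ^ (p - 1) * D x) = x ^ (p - 1) * D^[p] x - D x ^ p := by
  have hterm : ∀ i ∈ range (p - 1),
      D^[p - 1] (x ^ i * D x) * x ^ (p - 1 - i) = x ^ (p - 1) * D^[p] x := by
    intro i hi
    have hi : i + 1 < p := by grind
    rw [iterate_derivation_pow_mul_apply_self p D x (Nat.not_dvd_of_pos_of_lt i.succ_pos hi),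
      mul_right_comm, ← pow_add, Nat.add_sub_cancel' (by omega)]
  have hsum := sum_iterate_derivation_pow_mul p D x (D x)
  rw [← Nat.sub_add_cancel hp.out.one_le, sum_range_succ, Nat.sub_add_cancel hp.out.one_le,
    sum_congr rfl hterm, ← pow_succ, Nat.sub_add_cancel hp.out.one_le] at hsum
  simp only [sum_const, card_range, nsmul_eq_mul, Nat.cast_pred hp.out.pos, CharP.cast_eq_zero,
    tsub_self, pow_zero, mul_one] at hsum
  linear_combination hsum

/-- If the form `df - ∑ c_i x_i^(p-1) dx_i`, with constant `c_i`, vanishes on `D` and on `D^p`,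
then Katz's formula computes `D^(p-1) (D f) - D^p f = 0` as `-∑ c_i (D x_i)^p`. -/
theorem sum_mul_derivation_apply_pow_eq_zero {ι : Type*} (s : Finset ι) (D : Derivation R A A)
    {c x : ι → A} {f : A} (hc : ∀ i ∈ s, D (c i) = 0)
    (hD : D f = ∑ i ∈ s, c i * (x i ^ (p - 1) * D (x i)))
    (hDp : D^[p] f = ∑ i ∈ s, c i * (x i ^ (p - 1) * D^[p] (x i))) :
    ∑ i ∈ s, c i * D (x i) ^ p = 0 := by
  have hterm : ∀ i ∈ s, D^[p - 1] (c i * (x i ^ (p - 1) * D (x i))) =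
      c i * (x i ^ (p - 1) * D^[p] (x i)) - c i * D (x i) ^ p := fun i hi => by
    rw [iterate_derivation_mul_of_apply_eq_zero D (hc i hi),
      iterate_derivation_pow_sub_one_mul_apply_self, mul_sub]
  rw [← iterate_sub_one_apply D hp.out.ne_zero, hD, iterate_map_sum, sum_congr rfl hterm,
    sum_sub_distrib] at hDp
  linear_combination -hDp

theorem apply_antiderivative (D : Derivation R A A) {x : A} (hx : D x = 1) (g : A) :
    D (antiderivative p D x g) = g + x ^ (p - 1) * D^[p - 1] g := by
  let t (j : ℕ) : A := (p - 1 - j).factorial * (x ^ j * D^[j] g)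
  have hterm : ∀ j ∈ range (p - 1),
      D ((p - 2 - j).factorial * (x ^ (j + 1) * D^[j] g)) = t (j + 1) - t j := by
    intro j hj
    obtain ⟨m, hm⟩ : ∃ m, p = m + j + 2 := ⟨p - 2 - j, by grind⟩
    have hchar : (m : A) + j + 2 = 0 := by exact_mod_cast hm ▸ CharP.cast_eq_zero A p
    simp only [t]
    rw [show p - 2 - j = m by omega, show p - 1 - (j + 1) = m by omega,
      show p - 1 - j = m + 1 by omega, Nat.factorial_succ, Function.iterate_succ_apply']
    simp only [Derivation.leibniz, Derivation.leibniz_pow, Derivation.map_natCast, hx,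
      smul_eq_mul, nsmul_eq_mul, mul_zero, add_zero, Nat.add_sub_cancel]
    push_cast
    linear_combination (m.factorial : A) * x ^ j * D^[j] g * hchar
  rw [antiderivative, map_sum, sum_congr rfl hterm, sum_range_sub]
  simp only [t, tsub_self, tsub_zero, Nat.factorial_zero, natCast_factorial_sub_one_char,
    pow_zero, Function.iterate_zero_apply]
  push_cast
  ring

end CharP

section PDeriv

variable {σ K : Type*}

theorem commute_pderiv [CommRing K] (i j : σ) :
    Function.Commute (pderiv i : Derivation K (MvPolynomial σ K) (MvPolynomial σ K))
      (pderiv j : Derivation K (MvPolynomial σ K) (MvPolynomial σ K)) := by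
  classical
  have hlie : ⁅(pderiv i : Derivation K (MvPolynomial σ K) (MvPolynomial σ K)),
      (pderiv j : Derivation K (MvPolynomial σ K) (MvPolynomial σ K))⁆ = 0 := by
    refine derivation_ext fun k => ?_
    simp only [Derivation.commutator_apply, pderiv_X, Pi.single_apply]
    split_ifs <;> simp
  intro g
  simpa [Derivation.commutator_apply, sub_eq_zero] using DFunLike.congr_fun hlie g

theorem derivation_apply_eq_sum_pderiv [Fintype σ] [CommRing K]
    (d : Derivation K (MvPolynomial σ K) (MvPolynomial σ K)) (g : MvPolynomial σ K) :
    d g = ∑ i, d (X i) * pderiv i g := by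
  classical
  have hsum (k : MvPolynomial σ K) :
      (∑ i, d (X i) • pderiv i : Derivation K (MvPolynomial σ K) (MvPolynomial σ K)) k =
        ∑ i, d (X i) * pderiv i k :=
    (congrFun (map_sum (Derivation.coeFnAddMonoidHom (R := K) (A := MvPolynomial σ K)
      (M := MvPolynomial σ K)) _ univ) k).trans (Finset.sum_apply ..)
  have hd : d = ∑ i, d (X i) • pderiv i :=
    derivation_ext fun k => by simp [hsum, pderiv_X, Pi.single_apply]
  rw [← hsum, ← hd]

theorem iterate_char_pderiv [CommRing K] (p : ℕ) [hp : Fact p.Prime] [CharP K p] (i : σ)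
    (g : MvPolynomial σ K) : (pderiv i)^[p] g = 0 := by
  classical
  have hX (k : σ) : (pderiv i)^[p] (X k : MvPolynomial σ K) = 0 := by
    obtain ⟨n, rfl⟩ := Nat.exists_eq_add_of_le' hp.out.two_le
    rw [Function.iterate_succ_apply, Function.iterate_succ_apply, pderiv_X, Pi.single_apply]
    split_ifs <;> simp [iterate_map_zero]
  have hzero : charPowDerivation p (pderiv (R := K) i) = 0 :=
    derivation_ext fun k => by rw [charPowDerivation_apply, hX, Derivation.zero_apply]
  rw [← charPowDerivation_apply, hzero, Derivation.zero_apply]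

theorem totalDegree_pderiv_lt [CommSemiring K] {i : σ} {g : MvPolynomial σ K}
    (hg : pderiv i g ≠ 0) : (pderiv i g).totalDegree < g.totalDegree := by
  obtain ⟨m, hm, hdeg⟩ := exists_mem_eq_sup _ (support_nonempty.2 hg)
    fun m : σ →₀ ℕ => m.sum fun _ e => e
  rw [mem_support_iff, coeff_pderiv] at hm
  have hle := le_totalDegree (mem_support_iff.2 (left_ne_zero_of_mul hm))
  rw [Finsupp.sum_add_index' (by simp) (by simp), Finsupp.sum_single_index rfl] at hle
  rw [totalDegree, hdeg]
  exact hle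

theorem iterate_pderiv_eq_zero_of_dvd [CommSemiring K] [NoZeroDivisors K] {i : σ} {n : ℕ}
    (hn : n ≠ 0) {g : MvPolynomial σ K} (h : g ∣ (pderiv i)^[n] g) : (pderiv i)^[n] g = 0 := by
  have hdeg (k : ℕ) : ((pderiv i)^[k] g).totalDegree ≤ g.totalDegree := by
    induction k with
    | zero => rfl
    | succ k ih =>
      rw [Function.iterate_succ_apply']
      rcases eq_or_ne (pderiv i ((pderiv i)^[k] g)) 0 with h0 | h0
      · simp [h0]
      · exact (totalDegree_pderiv_lt h0).le.trans ih
  by_contra h0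
  have hle := totalDegree_le_of_dvd_of_isDomain h h0
  obtain ⟨k, rfl⟩ := Nat.exists_eq_succ_of_ne_zero hn
  rw [Function.iterate_succ_apply'] at h0 hle
  exact (hle.trans_lt (totalDegree_pderiv_lt h0)).not_ge (hdeg k)

theorem dvd_of_mem_support_of_pderiv_eq_zero [CommSemiring K] [NoZeroDivisors K] (p : ℕ)
    [CharP K p] {i : σ} {g : MvPolynomial σ K} (hg : pderiv i g = 0) {m : σ →₀ ℕ}
    (hm : m ∈ g.support) : p ∣ m i := by
  classical
  rcases Nat.eq_zero_or_pos (m i) with h0 | hpos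
  · simp [h0]
  obtain ⟨n, rfl⟩ : ∃ n, m = n + Finsupp.single i 1 :=
    ⟨m - Finsupp.single i 1, (tsub_add_cancel_of_le (by simpa [Finsupp.single_le_iff])).symm⟩
  have hcoeff := coeff_pderiv (i := i) g n
  rw [hg, coeff_zero, eq_comm, mul_eq_zero] at hcoeff
  rw [← CharP.cast_eq_zero_iff K p]
  simpa using hcoeff.resolve_left (mem_support_iff.1 hm)

theorem mem_subalgebra_of_pderiv_eq_zero [CommSemiring K] [NoZeroDivisors K] (p : ℕ) [CharP K p]
    {S : Subalgebra K (MvPolynomial σ K)} (hS : ∀ i, X i ^ p ∈ S) {g : MvPolynomial σ K}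
    (hg : ∀ i, pderiv i g = 0) : g ∈ S := by
  rw [g.as_sum]
  refine sum_mem fun m hm => ?_
  rw [monomial_eq, ← algebraMap_eq]
  refine mul_mem (S.algebraMap_mem _) (prod_mem fun i _ => ?_)
  obtain ⟨k, hk⟩ := dvd_of_mem_support_of_pderiv_eq_zero p (hg i) hm
  simpa only [hk, pow_mul] using pow_mem (hS i) k

theorem det_derivation_apply_X_eq_zero [Fintype σ] [DecidableEq σ] [CommRing K] [IsDomain K]
    (D : σ → Derivation K (MvPolynomial σ K) (MvPolynomial σ K)) {g : MvPolynomial σ K}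
    (hD : ∀ i, D i g = 0) {j : σ} (hg : pderiv j g ≠ 0) :
    (Matrix.of fun i k => D i (X k)).det = 0 := by
  refine Matrix.exists_mulVec_eq_zero_iff.1 ⟨fun k => pderiv k g, fun h => hg (congrFun h j), ?_⟩
  ext1 i
  exact (derivation_apply_eq_sum_pderiv (D i) g).symm.trans (hD i)

end PDeriv

section ClosedForm

variable {σ K : Type*} [CommRing K]

/-- Closedness of the differential form `∑ P_i dx_i` on affine space; the form is encoded by its
family of coefficients `P`. -/
def IsClosedForm (P : σ → MvPolynomial σ K) : Prop :=
  ∀ i j, pderiv i (P j) = pderiv j (P i)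

/-- The coefficient `c_i = ∂_i^(p-1) P_i` of the Cartier part `-∑ c_i x_i^(p-1) dx_i` of the form
`∑ P_i dx_i`, the obstruction to its exactness; up to sign, `c_i` is the `p`-th power of the `i`-th
coefficient of its image under the Cartier operator. -/
noncomputable def cartierCoeff (p : ℕ) (P : σ → MvPolynomial σ K) (i : σ) : MvPolynomial σ K :=
  (pderiv i)^[p - 1] (P i)

variable (p : ℕ) [hp : Fact p.Prime] [CharP K p] {P : σ → MvPolynomial σ K}

theorem iterate_sub_one_pderiv_pderiv (i : σ) (g : MvPolynomial σ K) :
    (pderiv i)^[p - 1] (pderiv i g) = 0 := by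
  rw [iterate_sub_one_apply _ hp.out.ne_zero, iterate_char_pderiv]

theorem IsClosedForm.pderiv_cartierCoeff (hP : IsClosedForm P) (i j : σ) :
    pderiv j (cartierCoeff p P i) = 0 := by
  rw [cartierCoeff, ((commute_pderiv j i).iterate_right (p - 1)).eq, hP j i,
    iterate_sub_one_pderiv_pderiv]

/-- The Poincaré lemma in characteristic `p`. The variables are treated one at a time: the
correction `G` integrates the remaining error along `x_j`, and by closedness it does not change
the derivatives along the earlier variables. -/
theorem IsClosedForm.exists_pderiv_eq [Finite σ] (hP : IsClosedForm P) :
    ∃ f, ∀ i, pderiv i f = P i + X i ^ (p - 1) * cartierCoeff p P i := by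
  classical
  have := Fintype.ofFinite σ
  suffices ∀ s : Finset σ, ∃ f, ∀ i ∈ s, pderiv i f = P i + X i ^ (p - 1) * cartierCoeff p P i by
    simpa using this univ
  intro s
  induction s using Finset.induction_on with
  | empty => simp
  | insert j s hj ih =>
    obtain ⟨f, hf⟩ := ih
    let G := antiderivative p (pderiv j) (X j) (P j - pderiv j f)
    have hGj : pderiv j G = P j - pderiv j f + X j ^ (p - 1) * cartierCoeff p P j := by
      rw [apply_antiderivative p _ (pderiv_X_self j), iterate_map_sub,
        iterate_sub_one_pderiv_pderiv, sub_zero, cartierCoeff]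
    have hGi : ∀ i ∈ s, pderiv i G = 0 := by
      intro i hi
      have hij : j ≠ i := fun h => hj (h ▸ hi)
      refine apply_antiderivative_eq_zero p (commute_pderiv i j) (pderiv_X_of_ne hij) ?_
      rw [map_sub, (commute_pderiv i j).eq, hf i hi, map_add, hP i j, Derivation.leibniz,
        hP.pderiv_cartierCoeff p, Derivation.leibniz_pow, pderiv_X_of_ne hij.symm]
      simp
    refine ⟨f + G, fun i hi => ?_⟩
    rw [map_add]
    rcases mem_insert.1 hi with rfl | hi
    · rw [hGj]; ring
    · rw [hf i hi, hGi i hi, add_zero]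

theorem IsClosedForm.sum_cartierCoeff_mul_pow_eq_zero [Fintype σ] (hP : IsClosedForm P)
    (d : Derivation K (MvPolynomial σ K) (MvPolynomial σ K)) (hd : ∑ i, d (X i) * P i = 0)
    (hdp : ∑ i, d^[p] (X i) * P i = 0) : ∑ i, cartierCoeff p P i * d (X i) ^ p = 0 := by
  obtain ⟨f, hf⟩ := hP.exists_pderiv_eq p
  have hsum (E : Derivation K (MvPolynomial σ K) (MvPolynomial σ K))
      (hE : ∑ i, E (X i) * P i = 0) :
      E f = ∑ i, cartierCoeff p P i * (X i ^ (p - 1) * E (X i)) := by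
    rw [derivation_apply_eq_sum_pderiv, ← sub_eq_zero, ← hE, ← sum_sub_distrib]
    exact sum_congr rfl fun i _ => by rw [hf]; ring
  refine sum_mul_derivation_apply_pow_eq_zero p univ d (fun i _ => ?_) (hsum d hd) ?_
  · rw [derivation_apply_eq_sum_pderiv]
    exact sum_eq_zero fun j _ => by rw [hP.pderiv_cartierCoeff p, mul_zero]
  · simpa only [charPowDerivation_apply] using
      hsum (charPowDerivation p d) (by simpa only [charPowDerivation_apply] using hdp)

end ClosedForm

section TwoVariables

variable {K : Type*} [CommRing K]

theorem isClosedForm_fin_two {P : Fin 2 → MvPolynomial (Fin 2) K}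
    (hP : pderiv 0 (P 1) = pderiv 1 (P 0)) : IsClosedForm P := by
  intro i j
  fin_cases i <;> fin_cases j <;> first | rfl | exact hP | exact hP.symm

theorem apply_X_mul_iterate_char_apply_X [IsDomain K] (p : ℕ) [hp : Fact p.Prime] [CharP K p]
    (d : Derivation K (MvPolynomial (Fin 2) K) (MvPolynomial (Fin 2) K))
    {h : MvPolynomial (Fin 2) K} (hdh : d h = 0) {j : Fin 2} (hj : pderiv j h ≠ 0) :
    d (X 0) * d^[p] (X 1) = d (X 1) * d^[p] (X 0) := by
  have hdph : charPowDerivation p d h = 0 := by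
    rw [charPowDerivation_apply, ← iterate_sub_one_apply d hp.out.ne_zero, hdh, iterate_map_zero]
  have hdet := det_derivation_apply_X_eq_zero ![d, charPowDerivation p d]
    (by simp [Fin.forall_fin_two, hdh, hdph]) hj
  simpa [Matrix.det_fin_two, charPowDerivation_apply, sub_eq_zero] using hdet

end TwoVariables

theorem dvd_of_mul_pow_add_mul_pow_eq_zero {M : Type*} [CommRing M]
    [DecompositionMonoid M] {a b x y : M} (hab : IsRelPrime a b) {n : ℕ} (hn : n ≠ 0)
    (h : x * a ^ n + y * b ^ n = 0) : b ∣ x := by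
  refine hab.symm.pow_right.dvd_of_dvd_mul_right (z := a ^ n) ?_
  rw [eq_neg_of_add_eq_zero_left h, dvd_neg]
  exact dvd_mul_of_dvd_right (dvd_pow_self b hn) y

theorem corollary3_jacobian_of_nontrivial_constants_general
    {K : Type*} [CommRing K] [IsDomain K] [DecompositionMonoid (MvPolynomial (Fin 2) K)]
    (p : ℕ) [hp : Fact p.Prime] [CharP K p]
    (d : Derivation K (MvPolynomial (Fin 2) K) (MvPolynomial (Fin 2) K))
    (hcop : IsRelPrime (d (X 0)) (d (X 1)))
    (hdiv : pderiv (0 : Fin 2) (d (X 0)) + pderiv (1 : Fin 2) (d (X 1)) = 0)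
    (hne : {q : MvPolynomial (Fin 2) K | d q = 0} ≠
      ↑(Algebra.adjoin K ({X 0 ^ p, X 1 ^ p} : Set (MvPolynomial (Fin 2) K)))) :
    ∃ f : MvPolynomial (Fin 2) K, ∀ g,
      d g = pderiv (0 : Fin 2) f * pderiv (1 : Fin 2) g
          - pderiv (1 : Fin 2) f * pderiv (0 : Fin 2) g := by
  obtain ⟨h, hdh, j, hj⟩ : ∃ h, d h = 0 ∧ ∃ j, pderiv j h ≠ 0 := by
    by_contra! hcon
    refine hne (Set.Subset.antisymm (fun q hq => mem_subalgebra_of_pderiv_eq_zero p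
      (fun i => Algebra.subset_adjoin (by fin_cases i <;> simp)) (hcon q hq)) ?_)
    exact Derivation.eqOn_adjoin (D2 := 0) (by rintro _ (rfl | rfl) <;> simp [d.leibniz_pow])
  let P : Fin 2 → MvPolynomial (Fin 2) K := ![d (X 1), -d (X 0)]
  have hP : IsClosedForm P := isClosedForm_fin_two <| by
    simpa [P, neg_eq_iff_add_eq_zero] using hdiv
  have hcartier : cartierCoeff p P 0 * d (X 0) ^ p + cartierCoeff p P 1 * d (X 1) ^ p = 0 := by
    have hdp := apply_X_mul_iterate_char_apply_X p d hdh hj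
    simpa using hP.sum_cartierCoeff_mul_pow_eq_zero p d (by simp [P, mul_comm])
      (by simp [P, mul_comm (d^[p] _), hdp])
  have hp1 : p - 1 ≠ 0 := Nat.sub_ne_zero_of_lt hp.out.one_lt
  have hc0 : cartierCoeff p P 0 = 0 := iterate_pderiv_eq_zero_of_dvd hp1
    (dvd_of_mul_pow_add_mul_pow_eq_zero hcop hp.out.ne_zero hcartier)
  have hc1 : cartierCoeff p P 1 = 0 := iterate_pderiv_eq_zero_of_dvd hp1
    (neg_dvd.2 (dvd_of_mul_pow_add_mul_pow_eq_zero hcop.symm hp.out.ne_zero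
      ((add_comm _ _).trans hcartier)))
  obtain ⟨f, hf⟩ := hP.exists_pderiv_eq p
  refine ⟨f, fun g => ?_⟩
  simp only [derivation_apply_eq_sum_pderiv d g, Fin.sum_univ_two, hf, hc0, hc1, P,
    Matrix.cons_val_zero, Matrix.cons_val_one]
  ring

/-- Corollary 3.  `K` a UFD of characteristic `p > 0`.  If `d` is a
`K`-derivation of `K[x,y]` with `d(x), d(y)` coprime, zero divergence, and
`K[x,y]^d ≠ K[x^p,y^p]`, then `d` is a Jacobian derivation `d = d_f`. -/
theorem corollary3_jacobian_of_nontrivial_constants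
    {K : Type*} [CommRing K] [IsDomain K] [UniqueFactorizationMonoid K]
    (p : ℕ) [Fact p.Prime] [CharP K p]
    (d : Derivation K (MvPolynomial (Fin 2) K) (MvPolynomial (Fin 2) K))
    (hcop : ∀ q : MvPolynomial (Fin 2) K, q ∣ d (X 0) → q ∣ d (X 1) → IsUnit q)
    (hdiv : pderiv (0 : Fin 2) (d (X 0)) + pderiv (1 : Fin 2) (d (X 1)) = 0)
    (hne : {q : MvPolynomial (Fin 2) K | d q = 0} ≠
      ↑(Algebra.adjoin K ({X 0 ^ p, X 1 ^ p} : Set (MvPolynomial (Fin 2) K)))) :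
    ∃ f : MvPolynomial (Fin 2) K, ∀ g,
      d g = pderiv (0 : Fin 2) f * pderiv (1 : Fin 2) g
          - pderiv (1 : Fin 2) f * pderiv (0 : Fin 2) g :=
  corollary3_jacobian_of_nontrivial_constants_general p d (fun q => hcop q) hdiv hne
end
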